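/- Let L ∈ ℕ, let φ be an L-layer MPNN model, and let ψ : ℝ^{d_L} → ℝ^d be Lipschitz. Then ‖h^{(L)}_α − h^{(L)}_β‖₂ ≤ C_φ · W^L(α,β) for all α,β ∈ M_L, and ‖h_μ − h_ν‖₂ ≤ C_{(φ,ψ)} · δW^L(μ,ν) for all Borel probability measures μ,ν on M_L. Moreover, the analogous inequalities hold on M = M_∞ and on P(M) with the metrics d_W and δW^∞, with an additional factor of L in the Lipschitz constants. -/

import Mathlib

open MeasureTheory Set

noncomputable section

/-- Borel measures of total mass at most one on `X`. -/
abbrev SubProb (X : Type) [MeasurableSpace X] : Type :=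
  {μ : Measure X // μ Set.univ ≤ 1}

/-- The weak topology on `SubProb X`: the coarsest topology making all maps
`μ ↦ ∫ f dμ` for bounded continuous `f` continuous. -/
def subProbWeakTop (X : Type) [MeasurableSpace X] [TopologicalSpace X] :
    TopologicalSpace (SubProb X) :=
  ⨅ f : BoundedContinuousFunction X ℝ,
    TopologicalSpace.induced (fun μ => ∫ x, f x ∂μ.val) inferInstance

/-- Iterated degree measure spaces with their (weak) topologies:
`M 0` is a one-point space and `M (h+1)` is the space of Borel measures of total
mass at most one on `M h` with the weak topology. -/
def IDM : ℕ → Σ X : Type, TopologicalSpace X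
  | 0 => ⟨Unit, inferInstance⟩
  | (h+1) =>
      let p := IDM h
      ⟨@SubProb p.1 (@borel p.1 p.2), @subProbWeakTop p.1 (@borel p.1 p.2) p.2⟩

/-- The space of iterated degree measures of depth `h`. -/
def M (h : ℕ) : Type := (IDM h).1

instance (h : ℕ) : TopologicalSpace (M h) := (IDM h).2
instance (h : ℕ) : MeasurableSpace (M h) := borel (M h)
instance (h : ℕ) : BorelSpace (M h) := ⟨rfl⟩

def toSub {h : ℕ} (α : M (h+1)) : SubProb (M h) := α
def ofSub {h : ℕ} (μ : SubProb (M h)) : M (h+1) := μ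
/-- The underlying measure of an iterated degree measure. -/
def toMeas {h : ℕ} (α : M (h+1)) : Measure (M h) := (toSub α).1

def uwAux {X : Type _} [MeasurableSpace X] (d : X → X → ℝ) (μ ν : Measure X) : ℝ :=
  (μ Set.univ).toReal - (ν Set.univ).toReal +
    sInf {r : ℝ | ∃ γ : Measure (X × X), γ Set.univ ≤ 1 ∧
      γ.map Prod.fst ≤ μ ∧ γ.map Prod.snd = ν ∧ r = ∫ p, d p.1 p.2 ∂γ}

open Classical in
/-- The unbalanced Wasserstein distance w.r.t. a distance function `d`:
`‖μ‖ - ‖ν‖` plus the optimal transport cost over sub-couplings, where w.l.o.g.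
`‖μ‖ ≥ ‖ν‖`. -/
def uwDist {X : Type _} [MeasurableSpace X] (d : X → X → ℝ) (μ ν : Measure X) : ℝ :=
  if ν Set.univ ≤ μ Set.univ then uwAux d μ ν else uwAux d ν μ

/-- The classical Wasserstein distance (over couplings) w.r.t. a cost `d`. -/
def wassersteinDist {X : Type _} [MeasurableSpace X] (d : X → X → ℝ)
    (μ ν : Measure X) : ℝ :=
  sInf {r : ℝ | ∃ γ : Measure (X × X),
    γ.map Prod.fst = μ ∧ γ.map Prod.snd = ν ∧ r = ∫ p, d p.1 p.2 ∂γ}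

/-- The iterated unbalanced Wasserstein metrics `W^h` on the spaces `M h`. -/
def Wdist : (h : ℕ) → M h → M h → ℝ
  | 0, _, _ => 0
  | (h+1), α, β => uwDist (Wdist h) (toMeas α) (toMeas β)

/-- Borel probability measures on `X`. -/
abbrev ProbM (X : Type) [MeasurableSpace X] : Type :=
  {μ : Measure X // IsProbabilityMeasure μ}

/-- The weak topology on Borel probability measures. -/
def probWeakTop (X : Type) [MeasurableSpace X] [TopologicalSpace X] :
    TopologicalSpace (ProbM X) :=
  ⨅ f : BoundedContinuousFunction X ℝ,
    TopologicalSpace.induced (fun μ => ∫ x, f x ∂μ.val) inferInstance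

/-- The projections `p_{h+1,h} : M (h+1) → M h`, given by pushforward. -/
def projM : (h : ℕ) → M (h+1) → M h
  | 0, _ => ()
  | (h+1), α => ofSub ⟨(toMeas α).map (projM h), by
      by_cases hf : AEMeasurable (projM h) (toMeas α)
      · rw [Measure.map_apply_of_aemeasurable hf MeasurableSet.univ, Set.preimage_univ]
        exact (toSub α).2
      · rw [Measure.map_of_not_aemeasurable hf]
        simp⟩

/-- The inverse limit `M_∞` of the spaces `M h` along the projections,
with the subspace topology of the product topology. -/
abbrev Minf : Type := {α : (h : ℕ) → M h // ∀ h, projM h (α (h+1)) = α h}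

instance : MeasurableSpace Minf := borel Minf
instance : BorelSpace Minf := ⟨rfl⟩
/-- An MPNN model: dimensions `d t`, an initial feature `φ₀ ∈ ℝ^{d 0}`, and
continuous update functions `φ t : ℝ^{d t} → ℝ^{d (t+1)}`. An `L`-layer model uses
the layers `φ 0, …, φ (L-1)`. -/
structure MPNNModel where
  d : ℕ → ℕ
  φ₀ : EuclideanSpace ℝ (Fin (d 0))
  φ : (t : ℕ) → EuclideanSpace ℝ (Fin (d t)) → EuclideanSpace ℝ (Fin (d (t+1)))
  cont : ∀ t, Continuous (φ t)

/-- MPNN features on iterated degree measures: `h^{(0)}_α = φ₀` and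
`h^{(t+1)}_α = φ_t (∫ h^{(t)}_β dα(β))`. -/
def idmFeat (m : MPNNModel) : (t : ℕ) → M t → EuclideanSpace ℝ (Fin (m.d t))
  | 0, _ => m.φ₀
  | (t+1), α => m.φ t (∫ β, idmFeat m t β ∂(toMeas α))


/-- `d_W(α,β) = sup_h (1/h) · W^h(α_h, β_h)` on the inverse limit. -/
def dWinf (α β : Minf) : ℝ := ⨆ h : ℕ, ((h : ℝ))⁻¹ * Wdist h (α.1 h) (β.1 h)

/-- The set `{∫ h^{(t)}_β dα : α ∈ M (t+1)}` of attainable aggregated inputs of the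
layer function `φ t`. -/
def aggSet (m : MPNNModel) (t : ℕ) : Set (EuclideanSpace ℝ (Fin (m.d t))) :=
  {z | ∃ α : M (t+1), z = ∫ β, idmFeat m t β ∂(toMeas α)}

/-- The set `{∫ h^{(L)}_β dν : ν ∈ P(M L)}` of attainable aggregated inputs of the
readout function. -/
def probAgg (m : MPNNModel) (L : ℕ) : Set (EuclideanSpace ℝ (Fin (m.d L))) :=
  {z | ∃ ν : ProbM (M L), z = ∫ β, idmFeat m L β ∂ν.1}

/-- The Lipschitz constant `C_φ` of an MPNN model, built from the layerwise
Lipschitz constants `c t` and the bounds `B t` on the feature values: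
`C_{φ₀} = 0` and `C_{φ_{t+1}} = c t · (B t + C_{φ_t})`. -/
def mpnnC (c : ℕ → NNReal) (B : ℕ → ℝ) : ℕ → ℝ
  | 0 => 0
  | (t+1) => (c t : ℝ) * (B t + mpnnC c B t)

/-!
A feature that is bounded by `B` and `C`-Lipschitz for the cost `d` has integrals that are
`(B + C)`-Lipschitz for `uwDist d`: in a transport plan, transported mass contributes `C` times its
cost and discarded mass contributes `B`. Induction over the layers then gives the theorem, provided
that the cost `W^h` is measurable, so that its integral against a plan is not a junk value.

Measurability is the delicate point. Discarding mass costs `1 ≥ d`, so dropping the constraint that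
the smaller measure be transported completely turns the distance into `max ‖μ‖ ‖ν‖` minus the
largest total gain `∫ (1 - d) dγ` over plans `γ` whose marginals are dominated by `μ` and `ν`. If
`d` is almost constant on the products of the cells of a finite partition, this gain depends, up to
a small error, only on the masses of the cells, and continuously so. Rounding these masses yields a
finite partition on the next level. The cells are kept in the Baire σ-algebra because the weak
topology gives direct access only to integrals of continuous functions.
-/

section Subcouplings

variable {X Y Z : Type*} [MeasurableSpace X] [MeasurableSpace Y] [MeasurableSpace Z]

theorem map_withDensity_comp (μ : Measure X) {f : X → Y} {r : Y → ENNReal}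
    (hf : Measurable f) (hr : Measurable r) :
    (μ.withDensity (r ∘ f)).map f = (μ.map f).withDensity r := by
  ext s hs
  rw [Measure.map_apply hf hs, withDensity_apply _ (hf hs), withDensity_apply _ hs,
    setLIntegral_map hs hr hf, Function.comp_def]

theorem fst_withDensity_prod (μ : Measure X) (ν : Measure Y) [SFinite μ] [SFinite ν]
    {r : X × Y → ENNReal} (hr : Measurable r) :
    ((μ.prod ν).withDensity r).fst = μ.withDensity fun x => ∫⁻ y, r (x, y) ∂ν := by
  ext s hs
  rw [Measure.fst_apply hs, withDensity_apply _ (measurable_fst hs), withDensity_apply _ hs,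
    ← prod_univ, ← Measure.prod_restrict, Measure.restrict_univ,
    lintegral_prod _ hr.aemeasurable]

theorem withDensity_le_withDensity {μ ν : Measure X} (h : μ ≤ ν) (f : X → ENNReal) :
    μ.withDensity f ≤ ν.withDensity f := by
  refine Measure.le_iff.2 fun s hs => ?_
  rw [withDensity_apply _ hs, withDensity_apply _ hs]
  exact lintegral_mono' (Measure.restrict_mono_measure h s) le_rfl

theorem le_one_of_withDensity_le_self {μ : Measure X} [SigmaFinite μ] {k : X → ENNReal}
    (hk : Measurable k) (h : μ.withDensity k ≤ μ) : k ≤ᵐ[μ] 1 :=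
  (Measure.rnDeriv_withDensity μ hk).symm.le.trans (Measure.rnDeriv_le_one_of_le h)

/-- Riesz decomposition of `γ` along `f`. -/
theorem exists_add_eq_of_map_le_add {γ : Measure Z} {f : Z → X} (hf : Measurable f)
    {μ σ : Measure X} [IsFiniteMeasure μ] [IsFiniteMeasure σ] (h : γ.map f ≤ μ + σ) :
    ∃ γ₁ γ₂, γ₁ + γ₂ = γ ∧ γ₁.map f ≤ μ ∧ γ₂.map f ≤ σ := by
  have map_density_le (κ : Measure X) [IsFiniteMeasure κ] (hκ : κ ≤ μ + σ) :
      (γ.withDensity (κ.rnDeriv (μ + σ) ∘ f)).map f ≤ κ := by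
    rw [map_withDensity_comp γ hf (κ.measurable_rnDeriv _)]
    exact (withDensity_le_withDensity h _).trans_eq
      (Measure.withDensity_rnDeriv_eq _ _ (Measure.absolutelyContinuous_of_le hκ))
  have densities_add : μ.rnDeriv (μ + σ) + σ.rnDeriv (μ + σ) =ᵐ[μ + σ] 1 :=
    (Measure.rnDeriv_add' μ σ (μ + σ)).symm.trans (Measure.rnDeriv_self _)
  refine ⟨_, _, ?_, map_density_le μ (Measure.le_add_right le_rfl),
    map_density_le σ (Measure.le_add_left le_rfl)⟩
  rw [← withDensity_add_left ((μ.measurable_rnDeriv _).comp hf)]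
  conv_rhs => rw [← withDensity_one (μ := γ)]
  exact withDensity_congr_ae
    (ae_of_ae_map hf.aemeasurable ((Measure.absolutelyContinuous_of_le h).ae_le densities_add))

/-- `γ` is a plan moving part of `μ` onto part of `ν`. Only upper bounds on the marginals are
required, which makes the notion symmetric and stable under restriction and addition of mass. -/
structure IsSubcoupling (γ : Measure (X × Y)) (μ : Measure X) (ν : Measure Y) : Prop where
  fst_le : γ.fst ≤ μ
  snd_le : γ.snd ≤ ν

namespace IsSubcoupling

variable {γ : Measure (X × Y)} {μ μ' : Measure X} {ν ν' : Measure Y}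

theorem univ_le_left (h : IsSubcoupling γ μ ν) : γ univ ≤ μ univ :=
  Measure.fst_univ.symm.trans_le (h.fst_le univ)

theorem isFiniteMeasure [IsFiniteMeasure μ] (h : IsSubcoupling γ μ ν) : IsFiniteMeasure γ :=
  ⟨h.univ_le_left.trans_lt (measure_lt_top μ univ)⟩

theorem swap (h : IsSubcoupling γ μ ν) : IsSubcoupling (γ.map Prod.swap) ν μ :=
  ⟨Measure.fst_map_swap.trans_le h.snd_le, Measure.snd_map_swap.trans_le h.fst_le⟩

theorem zero : IsSubcoupling (0 : Measure (X × Y)) μ ν :=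
  ⟨Measure.fst_zero.trans_le μ.zero_le, Measure.snd_zero.trans_le ν.zero_le⟩

theorem mono (h : IsSubcoupling γ μ ν) (hμ : μ ≤ μ') (hν : ν ≤ ν') : IsSubcoupling γ μ' ν' :=
  ⟨h.fst_le.trans hμ, h.snd_le.trans hν⟩

theorem map {X' Y' : Type*} [MeasurableSpace X'] [MeasurableSpace Y'] {p : X → X'} {q : Y → Y'}
    (h : IsSubcoupling γ μ ν) (hp : Measurable p) (hq : Measurable q) :
    IsSubcoupling (γ.map (Prod.map p q)) (μ.map p) (ν.map q) := by
  constructor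
  · rw [Measure.fst, Measure.map_map measurable_fst (hp.prodMap hq), Prod.map_fst',
      ← Measure.map_map hp measurable_fst]
    exact Measure.map_mono h.fst_le hp
  · rw [Measure.snd, Measure.map_map measurable_snd (hp.prodMap hq), Prod.map_snd',
      ← Measure.map_map hq measurable_snd]
    exact Measure.map_mono h.snd_le hq

end IsSubcoupling

theorem exists_fst_le_snd_eq (μ : Measure X) (ν : Measure Y) [IsFiniteMeasure μ]
    [IsFiniteMeasure ν] (h : ν univ ≤ μ univ) :
    ∃ γ : Measure (X × Y), γ.fst ≤ μ ∧ γ.snd = ν := by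
  refine ⟨(μ univ)⁻¹ • μ.prod ν, ?_, ?_⟩
  · have mass_le_one : (μ univ)⁻¹ * ν univ ≤ 1 :=
      (mul_le_mul_right h _).trans (ENNReal.inv_mul_le_one _)
    rw [Measure.fst, Measure.map_smul, Measure.map_fst_prod, smul_smul]
    exact (IsOrderedSMul.smul_le_smul_right _ _ mass_le_one μ).trans_eq (one_smul _ _)
  · rw [Measure.snd, Measure.map_smul, Measure.map_snd_prod, smul_smul]
    rcases eq_or_ne (μ univ) 0 with hμ | hμ
    · have : ν = 0 := Measure.measure_univ_eq_zero.1 (le_antisymm (h.trans_eq hμ) zero_le)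
      simp [this]
    · rw [ENNReal.inv_mul_cancel hμ (measure_ne_top _ _), one_smul]

theorem IsSubcoupling.exists_le_snd_eq {γ : Measure (X × Y)} {μ : Measure X} {ν : Measure Y}
    [IsFiniteMeasure μ] [IsFiniteMeasure ν] (hγ : IsSubcoupling γ μ ν) (h : ν univ ≤ μ univ) :
    ∃ γ', γ ≤ γ' ∧ γ'.fst ≤ μ ∧ γ'.snd = ν := by
  have := hγ.isFiniteMeasure
  have fst_add : μ - γ.fst + γ.fst = μ := Measure.sub_add_cancel_of_le hγ.fst_le
  have snd_add : ν - γ.snd + γ.snd = ν := Measure.sub_add_cancel_of_le hγ.snd_le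
  have rest_le : (ν - γ.snd) univ ≤ (μ - γ.fst) univ := by
    rw [← fst_add, ← snd_add, Measure.add_apply, Measure.add_apply, Measure.fst_univ,
      Measure.snd_univ] at h
    exact (ENNReal.add_le_add_iff_right (measure_ne_top γ univ)).1 h
  obtain ⟨δ, hδ_fst, hδ_snd⟩ := exists_fst_le_snd_eq (μ - γ.fst) (ν - γ.snd) rest_le
  refine ⟨δ + γ, Measure.le_add_left le_rfl, ?_, ?_⟩
  · rw [Measure.fst_add]
    exact (add_le_add_left hδ_fst _).trans_eq fst_add
  · rw [Measure.snd_add, hδ_snd, snd_add]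

theorem fst_withDensity_comp_le {X' Y' : Type*} [MeasurableSpace X'] [MeasurableSpace Y']
    {μ : Measure X} {ν : Measure Y} [IsFiniteMeasure μ] [IsFiniteMeasure ν]
    {p : X → X'} {q : Y → Y'} (hp : Measurable p) (hq : Measurable q)
    {r : X' × Y' → ENNReal} (hr : Measurable r)
    (h : (((μ.map p).prod (ν.map q)).withDensity r).fst ≤ μ.map p) :
    ((μ.prod ν).withDensity (r ∘ Prod.map p q)).fst ≤ μ := by
  rw [fst_withDensity_prod _ _ hr] at h
  rw [fst_withDensity_prod _ _ (hr.comp (hp.prodMap hq))]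
  have density_le_one := ae_of_ae_map hp.aemeasurable
    (le_one_of_withDensity_le_self hr.lintegral_prod_right' h)
  conv_rhs => rw [← withDensity_one (μ := μ)]
  refine withDensity_mono (density_le_one.mono fun x hx => ?_)
  rwa [lintegral_map (f := fun y => r (p x, y)) (by fun_prop) hq] at hx

theorem map_swap_withDensity_prod (μ : Measure X) (ν : Measure Y) [SFinite μ] [SFinite ν]
    {r : X × Y → ENNReal} (hr : Measurable r) :
    ((μ.prod ν).withDensity r).map Prod.swap = (ν.prod μ).withDensity (r ∘ Prod.swap) := by
  rw [← Measure.prod_swap (μ := ν), ← map_withDensity_comp _ measurable_swap hr,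
    Measure.map_map measurable_swap measurable_swap, Prod.swap_swap_eq, Measure.map_id]

theorem IsSubcoupling.absolutelyContinuous_prod [Countable X] [Countable Y]
    {γ : Measure (X × Y)} {μ : Measure X} {ν : Measure Y} [SFinite ν]
    [MeasurableSingletonClass X] [MeasurableSingletonClass Y]
    (h : IsSubcoupling γ μ ν) : γ ≪ μ.prod ν := by
  intro s hs
  rw [← biUnion_of_singleton s, measure_biUnion_null_iff s.to_countable]
  rintro ⟨x, y⟩ hxy
  have : μ {x} * ν {y} = 0 := by
    rw [← Measure.prod_prod, singleton_prod_singleton]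
    exact measure_mono_null (singleton_subset_iff.2 hxy) hs
  rcases mul_eq_zero.1 this with hx | hy
  · refine measure_mono_null (t := Prod.fst ⁻¹' {x}) (by simp) ?_
    rw [← Measure.fst_apply (measurableSet_singleton x)]
    exact Measure.absolutelyContinuous_of_le h.fst_le hx
  · refine measure_mono_null (t := Prod.snd ⁻¹' {y}) (by simp) ?_
    rw [← Measure.snd_apply (measurableSet_singleton y)]
    exact Measure.absolutelyContinuous_of_le h.snd_le hy

/-- The lift has the density of `γ` with respect to the product of the pushforwards, pulled back
to `X × Y`. -/
theorem IsSubcoupling.exists_map_eq {ι κ : Type*} [MeasurableSpace ι] [MeasurableSpace κ]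
    [Countable ι] [Countable κ] [MeasurableSingletonClass ι] [MeasurableSingletonClass κ]
    {p : X → ι} {q : Y → κ} (hp : Measurable p) (hq : Measurable q)
    {μ : Measure X} {ν : Measure Y} [IsFiniteMeasure μ] [IsFiniteMeasure ν]
    {γ : Measure (ι × κ)} (h : IsSubcoupling γ (μ.map p) (ν.map q)) :
    ∃ γ', IsSubcoupling γ' μ ν ∧ γ'.map (Prod.map p q) = γ := by
  have := h.isFiniteMeasure
  obtain ⟨r, hr, rfl⟩ : ∃ r, Measurable r ∧ ((μ.map p).prod (ν.map q)).withDensity r = γ :=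
    ⟨_, Measure.measurable_rnDeriv _ _,
      Measure.withDensity_rnDeriv_eq _ _ h.absolutelyContinuous_prod⟩
  refine ⟨(μ.prod ν).withDensity (r ∘ Prod.map p q), ⟨?_, ?_⟩, ?_⟩
  · exact fst_withDensity_comp_le hp hq hr h.fst_le
  · have snd_le := h.swap.fst_le
    rw [map_swap_withDensity_prod _ _ hr] at snd_le
    rw [← Measure.fst_map_swap,
      map_swap_withDensity_prod μ ν (r := r ∘ Prod.map p q) (hr.comp (hp.prodMap hq))]
    exact fst_withDensity_comp_le (r := r ∘ Prod.swap) hq hp (hr.comp measurable_swap) snd_le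
  · rw [map_withDensity_comp _ (hp.prodMap hq) hr, ← Measure.map_prod_map _ _ hp hq]

end Subcouplings

section TransportGain

variable {X Y : Type*} [MeasurableSpace X] [MeasurableSpace Y]

/-- The largest total gain of a plan moving part of `μ` onto part of `ν` when moving a unit of
mass from `x` to `y` gains `s (x, y)`. With `s = 1 - d` this is the unbalanced Wasserstein distance
in disguise, but no longer subject to an exact marginal constraint. -/
def transportGain (s : X × Y → ENNReal) (μ : Measure X) (ν : Measure Y) : ENNReal :=
  ⨆ γ, ⨆ _ : IsSubcoupling γ μ ν, ∫⁻ z, s z ∂γ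

variable {s s' : X × Y → ENNReal} {μ μ' σ : Measure X} {ν ν' τ : Measure Y}

theorem IsSubcoupling.lintegral_le_transportGain {γ : Measure (X × Y)} (h : IsSubcoupling γ μ ν)
    (s : X × Y → ENNReal) : ∫⁻ z, s z ∂γ ≤ transportGain s μ ν :=
  le_iSup₂_of_le γ h le_rfl

theorem transportGain_mono (hs : s ≤ s') (hμ : μ ≤ μ') (hν : ν ≤ ν') :
    transportGain s μ ν ≤ transportGain s' μ' ν' :=
  iSup₂_le fun _ hγ => (lintegral_mono hs).trans ((hγ.mono hμ hν).lintegral_le_transportGain s')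

theorem transportGain_swap_le (hs : Measurable s) :
    transportGain (s ∘ Prod.swap) ν μ ≤ transportGain s μ ν :=
  iSup₂_le fun _ hγ => (lintegral_map hs measurable_swap).symm.trans_le
    (hγ.swap.lintegral_le_transportGain s)

theorem transportGain_swap (hs : Measurable s) :
    transportGain (s ∘ Prod.swap) ν μ = transportGain s μ ν :=
  le_antisymm (transportGain_swap_le hs)
    (transportGain_swap_le (hs.comp measurable_swap))

theorem lintegral_le_univ {Z : Type*} [MeasurableSpace Z] {f : Z → ENNReal} (hf : f ≤ 1)
    (γ : Measure Z) : ∫⁻ z, f z ∂γ ≤ γ univ :=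
  (lintegral_mono hf).trans_eq lintegral_one

theorem transportGain_le_univ_left (hs : s ≤ 1) : transportGain s μ ν ≤ μ univ :=
  iSup₂_le fun γ hγ => (lintegral_le_univ hs γ).trans hγ.univ_le_left

theorem transportGain_le_add_of_le_add {ε : ENNReal} (hs : ∀ z, s z ≤ s' z + ε) :
    transportGain s μ ν ≤ transportGain s' μ ν + ε * μ univ :=
  iSup₂_le fun γ hγ => calc
    ∫⁻ z, s z ∂γ ≤ ∫⁻ z, s' z + ε ∂γ := lintegral_mono hs
    _ = ∫⁻ z, s' z ∂γ + ε * γ univ := by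
      rw [lintegral_add_right _ measurable_const, lintegral_const]
    _ ≤ transportGain s' μ ν + ε * μ univ := by
      gcongr
      · exact hγ.lintegral_le_transportGain s'
      · exact hγ.univ_le_left

theorem transportGain_add_left_le [IsFiniteMeasure μ] [IsFiniteMeasure σ] (hs : s ≤ 1) :
    transportGain s (μ + σ) ν ≤ transportGain s μ ν + σ univ := by
  refine iSup₂_le fun γ hγ => ?_
  obtain ⟨γ₁, γ₂, rfl, h₁, h₂⟩ := exists_add_eq_of_map_le_add measurable_fst hγ.fst_le
  have hγ₁ : IsSubcoupling γ₁ μ ν :=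
    ⟨h₁, (Measure.snd_mono (Measure.le_add_right le_rfl)).trans hγ.snd_le⟩
  rw [lintegral_add_measure]
  refine add_le_add (hγ₁.lintegral_le_transportGain s) ((lintegral_le_univ hs γ₂).trans ?_)
  exact Measure.fst_univ.symm.trans_le (h₂ univ)

theorem transportGain_add_right_le [IsFiniteMeasure ν] [IsFiniteMeasure τ] (hs : s ≤ 1) :
    transportGain s μ (ν + τ) ≤ transportGain s μ ν + τ univ := by
  refine iSup₂_le fun γ hγ => ?_
  obtain ⟨γ₁, γ₂, rfl, h₁, h₂⟩ := exists_add_eq_of_map_le_add measurable_snd hγ.snd_le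
  have hγ₁ : IsSubcoupling γ₁ μ ν :=
    ⟨(Measure.fst_mono (Measure.le_add_right le_rfl)).trans hγ.fst_le, h₁⟩
  rw [lintegral_add_measure]
  refine add_le_add (hγ₁.lintegral_le_transportGain s) ((lintegral_le_univ hs γ₂).trans ?_)
  exact Measure.snd_univ.symm.trans_le (h₂ univ)

section Discretization

variable {ι κ : Type*} [MeasurableSpace ι] [MeasurableSpace κ]
  [MeasurableSingletonClass ι] [MeasurableSingletonClass κ] {p : X → ι} {q : Y → κ}

theorem transportGain_comp_prodMap [Countable ι] [Countable κ] [IsFiniteMeasure μ]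
    [IsFiniteMeasure ν] (hp : Measurable p) (hq : Measurable q) (S : ι × κ → ENNReal) :
    transportGain (S ∘ Prod.map p q) μ ν = transportGain S (μ.map p) (ν.map q) := by
  have lintegral_comp (γ : Measure (X × Y)) :
      ∫⁻ z, (S ∘ Prod.map p q) z ∂γ = ∫⁻ w, S w ∂γ.map (Prod.map p q) :=
    (lintegral_map Measurable.of_discrete (hp.prodMap hq)).symm
  refine le_antisymm (iSup₂_le fun γ hγ => ?_) (iSup₂_le fun γ hγ => ?_)
  · exact (lintegral_comp γ).trans_le ((hγ.map hp hq).lintegral_le_transportGain S)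
  · obtain ⟨γ', hγ', rfl⟩ := hγ.exists_map_eq hp hq
    exact (lintegral_comp γ').symm.trans_le (hγ'.lintegral_le_transportGain _)

theorem map_le_map_add_smul_count [Countable ι] (hp : Measurable p) {η : ENNReal}
    (h : ∀ i, μ (p ⁻¹' {i}) ≤ μ' (p ⁻¹' {i}) + η) :
    μ.map p ≤ μ'.map p + η • Measure.count := by
  refine Measure.le_iff.2 fun t ht => ?_
  rw [← Measure.tsum_indicator_apply_singleton _ _ ht,
    ← Measure.tsum_indicator_apply_singleton _ _ ht]
  refine ENNReal.tsum_le_tsum fun i => indicator_le_indicator ?_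
  simpa [Measure.map_apply hp (measurableSet_singleton i)] using h i

theorem univ_le_univ_add_mul_card [Countable ι] (hp : Measurable p) {η : ENNReal}
    (h : ∀ i, μ (p ⁻¹' {i}) ≤ μ' (p ⁻¹' {i}) + η) : μ univ ≤ μ' univ + η * ENat.card ι := by
  simpa [Measure.map_apply hp] using map_le_map_add_smul_count hp h univ

/-- Both gains are compared with that of the cellwise supremum of `s`, which only depends on the
masses of the cells. -/
theorem transportGain_le_of_partition [Finite ι] [Finite κ] [IsFiniteMeasure μ]
    [IsFiniteMeasure μ'] [IsFiniteMeasure ν] [IsFiniteMeasure ν'] (hs : s ≤ 1)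
    (hp : Measurable p) (hq : Measurable q) {ε η : ENNReal} (hη : η ≠ ⊤)
    (hosc : ∀ z z', Prod.map p q z = Prod.map p q z' → s z ≤ s z' + ε)
    (hμ : ∀ i, μ (p ⁻¹' {i}) ≤ μ' (p ⁻¹' {i}) + η)
    (hν : ∀ j, ν (q ⁻¹' {j}) ≤ ν' (q ⁻¹' {j}) + η) :
    transportGain s μ ν ≤
      transportGain s μ' ν' + ε * μ' univ + η * ENat.card ι + η * ENat.card κ := by
  let S : ι × κ → ENNReal := fun w => ⨆ z, ⨆ _ : Prod.map p q z = w, s z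
  have hS : S ≤ 1 := fun w => iSup₂_le fun z _ => hs z
  have s_le_S : s ≤ S ∘ Prod.map p q := fun z => le_iSup₂_of_le z rfl le_rfl
  have S_le_s (z) : (S ∘ Prod.map p q) z ≤ s z + ε := iSup₂_le fun z' h => hosc z' z h
  have : IsFiniteMeasure (η • (Measure.count : Measure ι)) := Measure.smul_finite _ hη
  have : IsFiniteMeasure (η • (Measure.count : Measure κ)) := Measure.smul_finite _ hη
  calc transportGain s μ ν
      ≤ transportGain S (μ.map p) (ν.map q) :=
        (transportGain_mono s_le_S le_rfl le_rfl).trans_eq (transportGain_comp_prodMap hp hq S)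
    _ ≤ transportGain S (μ'.map p + η • Measure.count) (ν'.map q + η • Measure.count) :=
        transportGain_mono le_rfl (map_le_map_add_smul_count hp hμ)
          (map_le_map_add_smul_count hq hν)
    _ ≤ transportGain S (μ'.map p) (ν'.map q) + η * ENat.card ι + η * ENat.card κ := by
        refine (transportGain_add_right_le hS).trans ?_
        rw [Measure.smul_apply, Measure.count_univ, smul_eq_mul]
        gcongr
        refine (transportGain_add_left_le hS).trans_eq ?_
        rw [Measure.smul_apply, Measure.count_univ, smul_eq_mul]
    _ ≤ transportGain s μ' ν' + ε * μ' univ + η * ENat.card ι + η * ENat.card κ := by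
        rw [← transportGain_comp_prodMap hp hq S]
        gcongr
        exact transportGain_le_add_of_le_add S_le_s

end Discretization

end TransportGain

section UnbalancedWasserstein

/-- A measurable cost function with values in `[0, 1]`. -/
structure IsUnitCost {X : Type*} [MeasurableSpace X] (d : X → X → ℝ) : Prop where
  nonneg : ∀ x y, 0 ≤ d x y
  le_one : ∀ x y, d x y ≤ 1
  measurable : Measurable fun z : X × X => d z.1 z.2

/-- The gain `1 - d` of transporting a unit of mass at cost `d` instead of discarding it. -/
def costGain {X : Type*} (d : X → X → ℝ) (z : X × X) : ENNReal :=
  ENNReal.ofReal (1 - d z.1 z.2)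

theorem costGain_le_costGain_add {X : Type*} {d : X → X → ℝ} {ε : NNReal} {z z' : X × X}
    (h : d z'.1 z'.2 ≤ d z.1 z.2 + ε) :
    costGain d z ≤ costGain d z' + ε :=
  calc ENNReal.ofReal (1 - d z.1 z.2) ≤ ENNReal.ofReal (1 - d z'.1 z'.2 + ε) :=
        ENNReal.ofReal_le_ofReal (by linarith)
    _ ≤ ENNReal.ofReal (1 - d z'.1 z'.2) + ENNReal.ofReal ε := ENNReal.ofReal_add_le
    _ = costGain d z' + ε := by rw [ENNReal.ofReal_coe_nnreal, costGain]

namespace IsUnitCost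

variable {X : Type*} [MeasurableSpace X] {d : X → X → ℝ}

theorem integrable (hd : IsUnitCost d) (γ : Measure (X × X)) [IsFiniteMeasure γ] :
    Integrable (fun z => d z.1 z.2) γ :=
  .of_bound hd.measurable.aestronglyMeasurable 1 (.of_forall fun z => by
    rw [Real.norm_of_nonneg (hd.nonneg _ _)]
    exact hd.le_one _ _)

theorem costGain_le_one (hd : IsUnitCost d) : costGain d ≤ 1 := fun z =>
  ENNReal.ofReal_le_one.2 (sub_le_self 1 (hd.nonneg z.1 z.2))

theorem measurable_costGain (hd : IsUnitCost d) : Measurable (costGain d) :=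
  (measurable_const.sub hd.measurable).ennreal_ofReal

theorem integral_eq_sub_toReal_lintegral_costGain (hd : IsUnitCost d) (γ : Measure (X × X))
    [IsFiniteMeasure γ] :
    ∫ z, d z.1 z.2 ∂γ = γ.real univ - (∫⁻ z, costGain d z ∂γ).toReal := by
  have integral_gain : ∫ z, (1 - d z.1 z.2) ∂γ = (∫⁻ z, costGain d z ∂γ).toReal :=
    integral_eq_lintegral_of_nonneg_ae (.of_forall fun z => sub_nonneg.2 (hd.le_one _ _))
      (measurable_const.sub hd.measurable).aestronglyMeasurable
  rw [← integral_gain, integral_sub (integrable_const 1) (hd.integrable γ), integral_const,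
    smul_eq_mul, mul_one, sub_sub_cancel]

theorem transportGain_ne_top (hd : IsUnitCost d) {μ ν : Measure X} [IsFiniteMeasure μ] :
    transportGain (costGain d) μ ν ≠ ⊤ :=
  ((transportGain_le_univ_left hd.costGain_le_one).trans_lt (measure_lt_top μ univ)).ne

end IsUnitCost

theorem real_univ_eq_of_snd_eq {X Y : Type*} [MeasurableSpace X] [MeasurableSpace Y]
    {γ : Measure (X × Y)} {ν : Measure Y} (h : γ.snd = ν) : γ.real univ = ν.real univ := by
  rw [← h, measureReal_def, measureReal_def, Measure.snd_univ]

/-- The costs of the plans moving part of `μ` onto all of `ν`. -/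
def fullTransportCosts {X : Type*} [MeasurableSpace X] (d : X → X → ℝ) (μ ν : Measure X) : Set ℝ :=
  {r | ∃ γ : Measure (X × X), γ.fst ≤ μ ∧ γ.snd = ν ∧ r = ∫ z, d z.1 z.2 ∂γ}

theorem fullTransportCosts_nonempty {X : Type*} [MeasurableSpace X] (d : X → X → ℝ)
    {μ ν : Measure X} [IsFiniteMeasure μ] [IsFiniteMeasure ν] (h : ν univ ≤ μ univ) :
    (fullTransportCosts d μ ν).Nonempty :=
  let ⟨γ, hfst, hsnd⟩ := exists_fst_le_snd_eq μ ν h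
  ⟨_, γ, hfst, hsnd, rfl⟩

theorem uwAux_eq_add_sInf_fullTransportCosts {X : Type*} [MeasurableSpace X] (d : X → X → ℝ)
    (μ : Measure X) {ν : Measure X} (hν : ν univ ≤ 1) :
    uwAux d μ ν = μ.real univ - ν.real univ + sInf (fullTransportCosts d μ ν) := by
  have mass_le {γ : Measure (X × X)} (hsnd : γ.snd = ν) : γ univ ≤ 1 := by
    rwa [← Measure.snd_univ, hsnd]
  have costs_eq : {r : ℝ | ∃ γ : Measure (X × X), γ univ ≤ 1 ∧ γ.map Prod.fst ≤ μ ∧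
      γ.map Prod.snd = ν ∧ r = ∫ z, d z.1 z.2 ∂γ} = fullTransportCosts d μ ν :=
    Set.ext fun r => exists_congr fun γ => and_iff_right_of_imp fun hγ => mass_le hγ.2.1
  rw [uwAux, costs_eq, measureReal_def, measureReal_def]

theorem isGLB_fullTransportCosts {X : Type*} [MeasurableSpace X] {d : X → X → ℝ}
    (hd : IsUnitCost d) {μ ν : Measure X} [IsFiniteMeasure μ] [IsFiniteMeasure ν]
    (h : ν univ ≤ μ univ) :
    IsGLB (fullTransportCosts d μ ν)
      (ν.real univ - (transportGain (costGain d) μ ν).toReal) := by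
  have cost_eq {γ : Measure (X × X)} (hfst : γ.fst ≤ μ) (hsnd : γ.snd = ν) :
      ∫ z, d z.1 z.2 ∂γ = ν.real univ - (∫⁻ z, costGain d z ∂γ).toReal := by
    have := IsSubcoupling.isFiniteMeasure ⟨hfst, hsnd.le⟩
    rw [hd.integral_eq_sub_toReal_lintegral_costGain, real_univ_eq_of_snd_eq hsnd]
  have gain_ne_top {γ : Measure (X × X)} (hγ : IsSubcoupling γ μ ν) :
      ∫⁻ z, costGain d z ∂γ ≠ ⊤ :=
    ne_top_of_le_ne_top hd.transportGain_ne_top (hγ.lintegral_le_transportGain _)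
  constructor
  · rintro _ ⟨γ, hfst, hsnd, rfl⟩
    rw [cost_eq hfst hsnd]
    exact sub_le_sub_left (ENNReal.toReal_mono hd.transportGain_ne_top
      (IsSubcoupling.lintegral_le_transportGain ⟨hfst, hsnd.le⟩ _)) _
  · intro b hb
    have gain_le {γ : Measure (X × X)} (hγ : IsSubcoupling γ μ ν) :
        (∫⁻ z, costGain d z ∂γ).toReal ≤ ν.real univ - b := by
      obtain ⟨γ', hle, hfst, hsnd⟩ := hγ.exists_le_snd_eq h
      have b_le := (hb ⟨γ', hfst, hsnd, rfl⟩).trans_eq (cost_eq hfst hsnd)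
      exact (ENNReal.toReal_mono (gain_ne_top ⟨hfst, hsnd.le⟩)
        (lintegral_mono' hle le_rfl)).trans (le_sub_comm.1 b_le)
    have nonneg : 0 ≤ ν.real univ - b :=
      ENNReal.toReal_nonneg.trans (gain_le .zero)
    exact le_sub_comm.1 (ENNReal.toReal_le_of_le_ofReal nonneg (iSup₂_le fun γ hγ =>
      (ENNReal.le_ofReal_iff_toReal_le (gain_ne_top hγ) nonneg).2 (gain_le hγ)))

theorem uwAux_eq_sub_transportGain {X : Type*} [MeasurableSpace X] {d : X → X → ℝ}
    (hd : IsUnitCost d) {μ ν : Measure X} [IsFiniteMeasure μ] (hν : ν univ ≤ 1)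
    (h : ν univ ≤ μ univ) :
    uwAux d μ ν = μ.real univ - (transportGain (costGain d) μ ν).toReal := by
  have : IsFiniteMeasure ν := ⟨h.trans_lt (measure_lt_top μ univ)⟩
  rw [uwAux_eq_add_sInf_fullTransportCosts d μ hν,
    (isGLB_fullTransportCosts hd h).csInf_eq (fullTransportCosts_nonempty d h)]
  ring

variable {X : Type} [MeasurableSpace X] {d : X → X → ℝ}

instance (μ : SubProb X) : IsFiniteMeasure μ.1 :=
  ⟨μ.2.trans_lt ENNReal.one_lt_top⟩

theorem SubProb.real_univ_le_one (μ : SubProb X) : μ.1.real univ ≤ 1 :=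
  ENNReal.toReal_le_of_le_ofReal zero_le_one (μ.2.trans_eq ENNReal.ofReal_one.symm)

theorem transportGain_costGain_comm (hd : IsUnitCost d) (hsymm : ∀ x y, d x y = d y x)
    (μ ν : Measure X) :
    transportGain (costGain d) μ ν = transportGain (costGain d) ν μ := by
  have costGain_swap : costGain d ∘ Prod.swap = costGain d :=
    funext fun z => congrArg (fun r => ENNReal.ofReal (1 - r)) (hsymm z.2 z.1)
  rw [← transportGain_swap hd.measurable_costGain, costGain_swap]

theorem measureReal_univ_mono {X : Type*} [MeasurableSpace X] {μ ν : Measure X}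
    [IsFiniteMeasure ν] (h : μ univ ≤ ν univ) : μ.real univ ≤ ν.real univ :=
  ENNReal.toReal_mono (measure_ne_top _ _) h

theorem uwDist_eq_sub_transportGain (hd : IsUnitCost d) (hsymm : ∀ x y, d x y = d y x)
    (μ ν : SubProb X) :
    uwDist d μ.1 ν.1 = max (μ.1.real univ) (ν.1.real univ) -
      (transportGain (costGain d) μ.1 ν.1).toReal := by
  rw [uwDist]
  split_ifs with h
  · rw [uwAux_eq_sub_transportGain hd ν.2 h,
      max_eq_left (measureReal_univ_mono h)]
  · have h' := (not_le.1 h).le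
    rw [uwAux_eq_sub_transportGain hd μ.2 h', transportGain_costGain_comm hd hsymm,
      max_eq_right (measureReal_univ_mono h')]

theorem uwDist_comm (hd : IsUnitCost d) (hsymm : ∀ x y, d x y = d y x) (μ ν : SubProb X) :
    uwDist d μ.1 ν.1 = uwDist d ν.1 μ.1 := by
  rw [uwDist_eq_sub_transportGain hd hsymm, uwDist_eq_sub_transportGain hd hsymm, max_comm,
    transportGain_costGain_comm hd hsymm]

theorem uwDist_nonneg (hd : IsUnitCost d) (hsymm : ∀ x y, d x y = d y x) (μ ν : SubProb X) :
    0 ≤ uwDist d μ.1 ν.1 := by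
  rw [uwDist_eq_sub_transportGain hd hsymm, sub_nonneg]
  exact le_max_of_le_left (ENNReal.toReal_mono (measure_ne_top _ _)
    (transportGain_le_univ_left hd.costGain_le_one))

theorem uwDist_le_one (hd : IsUnitCost d) (hsymm : ∀ x y, d x y = d y x) (μ ν : SubProb X) :
    uwDist d μ.1 ν.1 ≤ 1 := by
  rw [uwDist_eq_sub_transportGain hd hsymm]
  exact (sub_le_self _ ENNReal.toReal_nonneg).trans
    (max_le μ.real_univ_le_one ν.real_univ_le_one)

theorem measure_le_add_of_abs_measureReal_sub_le {μ ν : Measure X} [IsFiniteMeasure μ]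
    [IsFiniteMeasure ν] {A : Set X} {η : NNReal} (h : |μ.real A - ν.real A| ≤ η) :
    μ A ≤ ν A + η := by
  rw [← ofReal_measureReal (μ := μ), ← ofReal_measureReal (μ := ν), ← ENNReal.ofReal_coe_nnreal,
    ← ENNReal.ofReal_add measureReal_nonneg η.coe_nonneg]
  exact ENNReal.ofReal_le_ofReal (sub_le_iff_le_add'.1 (abs_le.1 h).2)

section Partition

variable {ι : Type*} [Finite ι] [MeasurableSpace ι] [MeasurableSingletonClass ι] {p : X → ι}
  {ε η : NNReal} {μ ν μ' ν' : SubProb X}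

theorem real_univ_le_of_partition (hp : Measurable p)
    (hμ : ∀ i, |μ.1.real (p ⁻¹' {i}) - μ'.1.real (p ⁻¹' {i})| ≤ η) :
    μ.1.real univ ≤ μ'.1.real univ + Nat.card ι * η := by
  have h := univ_le_univ_add_mul_card hp fun i => measure_le_add_of_abs_measureReal_sub_le (hμ i)
  have card_mul_ne_top : (η : ENNReal) * ENat.card ι ≠ ⊤ := by
    simp [ENat.card_eq_coe_natCard, ENNReal.mul_ne_top]
  simpa [measureReal_def, ENat.card_eq_coe_natCard, mul_comm] using
    ENNReal.toReal_le_add h (measure_ne_top _ _) card_mul_ne_top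

theorem toReal_transportGain_le_of_partition (hd : IsUnitCost d) (hp : Measurable p)
    (hosc : ∀ x x' y y', p x = p x' → p y = p y' → |d x y - d x' y'| ≤ ε)
    (hμ : ∀ i, |μ.1.real (p ⁻¹' {i}) - μ'.1.real (p ⁻¹' {i})| ≤ η)
    (hν : ∀ i, |ν.1.real (p ⁻¹' {i}) - ν'.1.real (p ⁻¹' {i})| ≤ η) :
    (transportGain (costGain d) μ.1 ν.1).toReal ≤
      (transportGain (costGain d) μ'.1 ν'.1).toReal + (ε + 2 * Nat.card ι * η) := by
  have costGain_le (z z' : X × X) (h : Prod.map p p z = Prod.map p p z') :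
      costGain d z ≤ costGain d z' + ε := by
    refine costGain_le_costGain_add ?_
    have := (abs_le.1 (hosc z'.1 z.1 z'.2 z.2 (congrArg Prod.fst h).symm
      (congrArg Prod.snd h).symm)).2
    linarith
  have gain_le : transportGain (costGain d) μ.1 ν.1 ≤
      transportGain (costGain d) μ'.1 ν'.1 + ((ε + 2 * Nat.card ι * η : NNReal) : ENNReal) := by
    refine (transportGain_le_of_partition hd.costGain_le_one hp hp ENNReal.coe_ne_top costGain_le
      (fun i => measure_le_add_of_abs_measureReal_sub_le (hμ i))
      (fun i => measure_le_add_of_abs_measureReal_sub_le (hν i))).trans ?_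
    calc _ ≤ transportGain (costGain d) μ'.1 ν'.1 + ε * 1 + η * ENat.card ι + η * ENat.card ι := by
          gcongr
          exact μ'.2
      _ = _ := by
          rw [ENat.card_eq_coe_natCard, ENat.toENNReal_coe]
          push_cast
          ring
  simpa only [ENNReal.coe_toReal, NNReal.coe_add, NNReal.coe_mul, NNReal.coe_natCast,
    NNReal.coe_ofNat] using ENNReal.toReal_le_add gain_le hd.transportGain_ne_top ENNReal.coe_ne_top

theorem uwDist_le_of_partition (hd : IsUnitCost d) (hsymm : ∀ x y, d x y = d y x)
    (hp : Measurable p)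
    (hosc : ∀ x x' y y', p x = p x' → p y = p y' → |d x y - d x' y'| ≤ ε)
    (hμ : ∀ i, |μ.1.real (p ⁻¹' {i}) - μ'.1.real (p ⁻¹' {i})| ≤ η)
    (hν : ∀ i, |ν.1.real (p ⁻¹' {i}) - ν'.1.real (p ⁻¹' {i})| ≤ η) :
    uwDist d μ.1 ν.1 ≤ uwDist d μ'.1 ν'.1 + (ε + 3 * Nat.card ι * η) := by
  have mass_le := max_le_max (real_univ_le_of_partition hp hμ) (real_univ_le_of_partition hp hν)
  rw [max_add_add_right] at mass_le
  have gain_le := toReal_transportGain_le_of_partition hd hp hosc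
    (fun i => (abs_sub_comm _ _).trans_le (hμ i)) (fun i => (abs_sub_comm _ _).trans_le (hν i))
  rw [uwDist_eq_sub_transportGain hd hsymm, uwDist_eq_sub_transportGain hd hsymm]
  linarith

theorem abs_uwDist_sub_le_of_partition (hd : IsUnitCost d) (hsymm : ∀ x y, d x y = d y x)
    (hp : Measurable p)
    (hosc : ∀ x x' y y', p x = p x' → p y = p y' → |d x y - d x' y'| ≤ ε)
    (hμ : ∀ i, |μ.1.real (p ⁻¹' {i}) - μ'.1.real (p ⁻¹' {i})| ≤ η)
    (hν : ∀ i, |ν.1.real (p ⁻¹' {i}) - ν'.1.real (p ⁻¹' {i})| ≤ η) :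
    |uwDist d μ.1 ν.1 - uwDist d μ'.1 ν'.1| ≤ ε + 3 * Nat.card ι * η := by
  have le := uwDist_le_of_partition hd hsymm hp hosc hμ hν
  have ge := uwDist_le_of_partition hd hsymm hp hosc
    (fun i => (abs_sub_comm _ _).trans_le (hμ i)) (fun i => (abs_sub_comm _ _).trans_le (hν i))
  exact abs_le.2 ⟨by linarith, by linarith⟩

end Partition

end UnbalancedWasserstein

section LipschitzIntegrals

variable {X E : Type*} [MeasurableSpace X] [NormedAddCommGroup E] [NormedSpace ℝ E]
  {d : X → X → ℝ} {f : X → E} {B C : ℝ}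

theorem integrable_of_norm_le_const {E : Type*} [NormedAddCommGroup E] {f : X → E}
    (hf : StronglyMeasurable f) (hB : ∀ x, ‖f x‖ ≤ B) (μ : Measure X) [IsFiniteMeasure μ] :
    Integrable f μ :=
  .of_bound hf.aestronglyMeasurable B (.of_forall hB)

theorem norm_integral_fst_sub_integral_snd_le (hd : IsUnitCost d) (hf : StronglyMeasurable f)
    (hB : ∀ x, ‖f x‖ ≤ B) (hC : ∀ x y, ‖f x - f y‖ ≤ C * d x y)
    (γ : Measure (X × X)) [IsFiniteMeasure γ] :
    ‖∫ x, f x ∂γ.fst - ∫ x, f x ∂γ.snd‖ ≤ C * ∫ z, d z.1 z.2 ∂γ := by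
  have integrable_fst : Integrable (fun z : X × X => f z.1) γ :=
    integrable_of_norm_le_const (hf.comp_measurable measurable_fst) (fun z => hB z.1) γ
  have integrable_snd : Integrable (fun z : X × X => f z.2) γ :=
    integrable_of_norm_le_const (hf.comp_measurable measurable_snd) (fun z => hB z.2) γ
  rw [Measure.fst, Measure.snd,
    integral_map measurable_fst.aemeasurable hf.aestronglyMeasurable,
    integral_map measurable_snd.aemeasurable hf.aestronglyMeasurable,
    ← integral_sub integrable_fst integrable_snd, ← integral_const_mul]
  exact norm_integral_le_of_norm_le ((hd.integrable γ).const_mul C) (.of_forall fun z => hC _ _)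

theorem norm_integral_sub_integral_le_of_le (hf : StronglyMeasurable f) (hB : ∀ x, ‖f x‖ ≤ B)
    {μ ρ : Measure X} [IsFiniteMeasure μ] [IsFiniteMeasure ρ] (h : ρ ≤ μ) :
    ‖∫ x, f x ∂μ - ∫ x, f x ∂ρ‖ ≤ B * (μ.real univ - ρ.real univ) := by
  obtain ⟨σ, _, rfl⟩ : ∃ σ, IsFiniteMeasure σ ∧ σ + ρ = μ :=
    ⟨μ - ρ, inferInstance, Measure.sub_add_cancel_of_le h⟩
  rw [integral_add_measure (integrable_of_norm_le_const hf hB σ)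
    (integrable_of_norm_le_const hf hB ρ), add_sub_cancel_right, measureReal_add_apply,
    add_sub_cancel_right]
  exact norm_integral_le_of_norm_le_const (.of_forall hB)

theorem le_mul_csInf {S : Set ℝ} {a : ℝ} (hC : 0 ≤ C) (hS : S.Nonempty)
    (h : ∀ r ∈ S, a ≤ C * r) : a ≤ C * sInf S := by
  rw [← smul_eq_mul, ← Real.sInf_smul_of_nonneg hC]
  refine le_csInf hS.smul_set ?_
  rintro _ ⟨r, hr, rfl⟩
  exact h r hr

theorem norm_integral_sub_integral_le_mul_uwAux (hd : IsUnitCost d) (hf : StronglyMeasurable f)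
    (hB₀ : 0 ≤ B) (hC₀ : 0 ≤ C) (hB : ∀ x, ‖f x‖ ≤ B) (hC : ∀ x y, ‖f x - f y‖ ≤ C * d x y)
    {μ ν : Measure X} [IsFiniteMeasure μ] (hν : ν univ ≤ 1) (h : ν univ ≤ μ univ) :
    ‖∫ x, f x ∂μ - ∫ x, f x ∂ν‖ ≤ (B + C) * uwAux d μ ν := by
  have : IsFiniteMeasure ν := ⟨h.trans_lt (measure_lt_top μ univ)⟩
  have lost_mass_nonneg : 0 ≤ μ.real univ - ν.real univ := sub_nonneg.2 (measureReal_univ_mono h)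
  have cost_nonneg : 0 ≤ sInf (fullTransportCosts d μ ν) := Real.sInf_nonneg (by
    rintro _ ⟨γ, -, -, rfl⟩
    exact integral_nonneg fun z => hd.nonneg _ _)
  have le_of_plan : ∀ r ∈ fullTransportCosts d μ ν, ‖∫ x, f x ∂μ - ∫ x, f x ∂ν‖ -
      B * (μ.real univ - ν.real univ) ≤ C * r := by
    rintro _ ⟨γ, hfst, rfl, rfl⟩
    have := IsSubcoupling.isFiniteMeasure ⟨hfst, le_rfl⟩
    have discard := norm_integral_sub_integral_le_of_le hf hB hfst
    have move := norm_integral_fst_sub_integral_snd_le hd hf hB hC γ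
    have triangle := norm_sub_le_norm_sub_add_norm_sub
      (∫ x, f x ∂μ) (∫ x, f x ∂γ.fst) (∫ x, f x ∂γ.snd)
    have masses : γ.fst.real univ = γ.snd.real univ := by
      rw [measureReal_def, measureReal_def, Measure.fst_univ, Measure.snd_univ]
    rw [masses] at discard
    linarith
  have := le_mul_csInf hC₀ (fullTransportCosts_nonempty d h) le_of_plan
  rw [uwAux_eq_add_sInf_fullTransportCosts d μ hν]
  linarith [mul_nonneg hB₀ cost_nonneg, mul_nonneg hC₀ lost_mass_nonneg]

theorem norm_integral_sub_integral_le_mul_wassersteinDist (hd : IsUnitCost d)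
    (hf : StronglyMeasurable f) (hC₀ : 0 ≤ C) (hB : ∀ x, ‖f x‖ ≤ B)
    (hC : ∀ x y, ‖f x - f y‖ ≤ C * d x y) (μ ν : Measure X) [IsProbabilityMeasure μ]
    [IsProbabilityMeasure ν] :
    ‖∫ x, f x ∂μ - ∫ x, f x ∂ν‖ ≤ C * wassersteinDist d μ ν := by
  refine le_mul_csInf hC₀ ⟨_, μ.prod ν, Measure.fst_prod, Measure.snd_prod, rfl⟩ ?_
  rintro _ ⟨γ, hfst, hsnd, rfl⟩
  have := IsSubcoupling.isFiniteMeasure (γ := γ) ⟨hfst.le, hsnd.le⟩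
  simpa only [Measure.fst, Measure.snd, hfst, hsnd] using
    norm_integral_fst_sub_integral_snd_le hd hf hB hC γ

theorem wassersteinDist_nonneg (hd : IsUnitCost d) (μ ν : Measure X) :
    0 ≤ wassersteinDist d μ ν :=
  Real.sInf_nonneg (by
    rintro _ ⟨γ, -, -, rfl⟩
    exact integral_nonneg fun z => hd.nonneg _ _)

theorem norm_comp_integral_sub_le_mul_wassersteinDist {F : Type*} [NormedAddCommGroup F]
    {ψ : E → F} {K : NNReal} {S : Set E} (hψ : LipschitzOnWith K ψ S) (hd : IsUnitCost d)
    (hf : StronglyMeasurable f) (hC₀ : 0 ≤ C) (hB : ∀ x, ‖f x‖ ≤ B)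
    (hC : ∀ x y, ‖f x - f y‖ ≤ C * d x y) {μ ν : Measure X} [IsProbabilityMeasure μ]
    [IsProbabilityMeasure ν] (hμ : ∫ x, f x ∂μ ∈ S) (hν : ∫ x, f x ∂ν ∈ S) :
    ‖ψ (∫ x, f x ∂μ) - ψ (∫ x, f x ∂ν)‖ ≤ K * (C * wassersteinDist d μ ν) :=
  (hψ.norm_sub_le hμ hν).trans (mul_le_mul_of_nonneg_left
    (norm_integral_sub_integral_le_mul_wassersteinDist hd hf hC₀ hB hC μ ν) K.coe_nonneg)

theorem norm_integral_sub_integral_le_mul_uwDist {X : Type} [MeasurableSpace X] {d : X → X → ℝ}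
    {f : X → E} (hd : IsUnitCost d) (hf : StronglyMeasurable f) (hB₀ : 0 ≤ B) (hC₀ : 0 ≤ C)
    (hB : ∀ x, ‖f x‖ ≤ B) (hC : ∀ x y, ‖f x - f y‖ ≤ C * d x y) (μ ν : SubProb X) :
    ‖∫ x, f x ∂μ.1 - ∫ x, f x ∂ν.1‖ ≤ (B + C) * uwDist d μ.1 ν.1 := by
  rw [uwDist]
  split_ifs with h
  · exact norm_integral_sub_integral_le_mul_uwAux hd hf hB₀ hC₀ hB hC ν.2 h
  · rw [norm_sub_rev]
    exact norm_integral_sub_integral_le_mul_uwAux hd hf hB₀ hC₀ hB hC μ.2 (not_le.1 h).le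

end LipschitzIntegrals

section BaireSets

open scoped Topology

/-- The Baire σ-algebra, generated by the sets where some continuous `[0, 1]`-valued function
attains the value `1`. The mass of a Baire set is a measurable function on `SubProb X` for every
topological space `X`, so that no metrizability of the spaces `M h` is needed. -/
abbrev baire (X : Type*) [TopologicalSpace X] : MeasurableSpace X :=
  .generateFrom {s | ∃ g : C(X, unitInterval), s = g ⁻¹' {1}}

theorem baire_le {X : Type*} [TopologicalSpace X] [m : MeasurableSpace X]
    [OpensMeasurableSpace X] : baire X ≤ m := by
  refine MeasurableSpace.generateFrom_le ?_
  rintro _ ⟨g, rfl⟩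
  exact (isClosed_singleton.preimage g.continuous).measurableSet

theorem measurable_baire_of_continuous {X : Type*} [TopologicalSpace X] {f : X → ℝ}
    (hf : Continuous f) : Measurable[baire X] f := by
  let _ : MeasurableSpace X := baire X
  refine measurable_of_Iic fun a => MeasurableSpace.measurableSet_generateFrom
    ⟨⟨fun x => projIcc 0 1 zero_le_one (1 - (f x - a)), by fun_prop⟩, ?_⟩
  ext x
  exact (by simp : f x ≤ a ↔ 1 ≤ 1 - (f x - a)).trans (projIcc_eq_right one_pos).symm

theorem isPiSystem_preimage_one (X : Type*) [TopologicalSpace X] :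
    IsPiSystem {s | ∃ g : C(X, unitInterval), s = g ⁻¹' {1}} := by
  rintro _ ⟨f, rfl⟩ _ ⟨g, rfl⟩ -
  exact ⟨f ⊓ g, Set.ext fun x => (inf_eq_top_iff (a := f x) (b := g x)).symm⟩

variable {X : Type} [TopologicalSpace X] [MeasurableSpace X]

theorem continuous_integral_subProbWeakTop {f : X → ℝ} (hf : Continuous f) {C : ℝ}
    (hC : ∀ x, ‖f x‖ ≤ C) :
    Continuous[subProbWeakTop X, inferInstance] fun μ : SubProb X => ∫ x, f x ∂μ.1 :=
  continuous_iff_le_induced.2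
    (iInf_le _ (BoundedContinuousFunction.ofNormedAddCommGroup f hf C hC))

variable [OpensMeasurableSpace X]

theorem tendsto_integral_pow_measureReal (g : C(X, unitInterval)) (μ : Measure X)
    [IsFiniteMeasure μ] :
    Filter.Tendsto (fun n : ℕ => ∫ x, (g x : ℝ) ^ n ∂μ) .atTop
      (𝓝 (μ.real (g ⁻¹' {1}))) := by
  have measurableSet : MeasurableSet (g ⁻¹' {1}) :=
    (isClosed_singleton.preimage g.continuous).measurableSet
  rw [← integral_indicator_one measurableSet]
  refine tendsto_integral_of_dominated_convergence (fun _ => 1) (fun n => ?_)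
    (integrable_const _) (fun n => .of_forall fun x => ?_) (.of_forall fun x => ?_)
  · exact Continuous.aestronglyMeasurable (by fun_prop)
  · simpa [abs_of_nonneg (g x).2.1] using pow_le_one₀ (g x).2.1 (g x).2.2
  · by_cases hx : g x = 1
    · simp [hx]
    · simpa [hx] using tendsto_pow_atTop_nhds_zero_of_lt_one (g x).2.1
        (unitInterval.lt_one_iff_ne_one.2 hx)

theorem measurable_apply_preimage_one (g : C(X, unitInterval)) :
    Measurable[@baire (SubProb X) (subProbWeakTop X)] fun μ : SubProb X => μ.1 (g ⁻¹' {1}) := by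
  let _ : TopologicalSpace (SubProb X) := subProbWeakTop X
  let _ : MeasurableSpace (SubProb X) := baire (SubProb X)
  have measurable_real : Measurable fun μ : SubProb X => μ.1.real (g ⁻¹' {1}) :=
    measurable_of_tendsto_metrizable
      (fun n => measurable_baire_of_continuous (continuous_integral_subProbWeakTop
        (f := fun x => (g x : ℝ) ^ n) (C := 1) (by fun_prop) fun x => by
          simpa [abs_of_nonneg (g x).2.1] using pow_le_one₀ (g x).2.1 (g x).2.2))
      (tendsto_pi_nhds.2 fun μ => tendsto_integral_pow_measureReal g μ.1)
  simpa using measurable_real.ennreal_ofReal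

theorem measurable_apply_of_measurableSet_baire {A : Set X} (hA : MeasurableSet[baire X] A) :
    Measurable[@baire (SubProb X) (subProbWeakTop X)] fun μ : SubProb X => μ.1 A := by
  let _ : TopologicalSpace (SubProb X) := subProbWeakTop X
  let _ : MeasurableSpace (SubProb X) := baire (SubProb X)
  induction A, hA using MeasurableSpace.induction_on_inter (m := baire X) rfl
    (isPiSystem_preimage_one X) with
  | empty => simp
  | basic _ hs =>
    obtain ⟨g, rfl⟩ := hs
    exact measurable_apply_preimage_one g
  | compl s hs ih =>
    have measurable_univ : Measurable fun μ : SubProb X => μ.1 univ := by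
      have preimage_eq_univ : ContinuousMap.const X (1 : unitInterval) ⁻¹' {1} = univ :=
        eq_univ_of_forall fun _ => rfl
      simpa only [preimage_eq_univ] using measurable_apply_preimage_one (.const X 1)
    simp only [measure_compl (baire_le s hs) (measure_ne_top _ s)]
    exact measurable_univ.sub ih
  | iUnion s hdisj hs ih =>
    simpa only [measure_iUnion hdisj fun i => baire_le (s i) (hs i)] using Measurable.tsum ih

end BaireSets

section BairePartitions

/-- `d` is finitely Baire approximable if for every `ε > 0` there is a finite partition into Baire
sets, encoded as the fibres of `p`, such that `d` oscillates by at most `ε` on each product of two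
cells. Measurability of `d` for the product σ-algebra follows; unlike measurability, this property
passes from `d` to `uwDist d`. -/
def FinitelyBaireApproximable {X : Type*} [TopologicalSpace X] (d : X → X → ℝ) : Prop :=
  ∀ ε : NNReal, 0 < ε → ∃ (ι : Type) (_ : Finite ι) (p : X → ι),
    (∀ i, MeasurableSet[baire X] (p ⁻¹' {i})) ∧
    ∀ x x' y y', p x = p x' → p y = p y' → |d x y - d x' y'| ≤ ε

theorem FinitelyBaireApproximable.measurable {X : Type*} [TopologicalSpace X] [MeasurableSpace X]
    [OpensMeasurableSpace X] {d : X → X → ℝ} (h : FinitelyBaireApproximable d) :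
    Measurable fun z : X × X => d z.1 z.2 := by
  rcases isEmpty_or_nonempty X with _ | _
  · exact measurable_of_empty _
  choose ι finite_ι p hp hosc using fun n : ℕ => h (1 / (n + 1)) (by positivity)
  let representative (n : ℕ) (x : X) : X := Function.invFun (p n) (p n x)
  have p_representative (n : ℕ) (x : X) : p n (representative n x) = p n x :=
    Function.invFun_eq ⟨x, rfl⟩
  refine measurable_of_tendsto_metrizable
    (f := fun (n : ℕ) (z : X × X) => d (representative n z.1) (representative n z.2))
    (fun n => ?_) (tendsto_pi_nhds.2 fun z => ?_)
  · let _ : MeasurableSpace (ι n) := ⊤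
    have measurable_p : Measurable (p n) := measurable_to_countable' fun i => baire_le _ (hp n i)
    exact (measurable_of_countable fun k : ι n × ι n =>
      d (Function.invFun (p n) k.1) (Function.invFun (p n) k.2)).comp
        (measurable_p.prodMap measurable_p)
  · refine tendsto_iff_dist_tendsto_zero.2 (squeeze_zero (fun _ => dist_nonneg) (fun n => ?_)
      tendsto_one_div_add_atTop_nhds_zero_nat)
    simpa [Real.dist_eq] using hosc n _ _ _ _ (p_representative n z.1) (p_representative n z.2)

theorem abs_sub_le_inv_of_floor_mul_eq {N : ℕ} (hN : 0 < N) {a b : ℝ} (ha : 0 ≤ a) (hb : 0 ≤ b)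
    (h : ⌊N * a⌋₊ = ⌊N * b⌋₊) : |a - b| ≤ (N : ℝ)⁻¹ := by
  have hN' : (0 : ℝ) < N := Nat.cast_pos.2 hN
  have := Nat.floor_le (mul_nonneg hN'.le ha)
  have := Nat.floor_le (mul_nonneg hN'.le hb)
  have := Nat.lt_floor_add_one (N * a)
  have := Nat.lt_floor_add_one (N * b)
  rw [h] at *
  rw [← one_div, le_div_iff₀ hN', ← abs_of_pos hN', ← abs_mul, abs_le]
  constructor <;> linarith

variable {X : Type} [TopologicalSpace X] [MeasurableSpace X]

/-- The masses of the cells `p ⁻¹' {i}`, rounded down to multiples of `1 / N`. -/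
def roundedMasses {ι : Type*} (p : X → ι) (N : ℕ) (μ : SubProb X) (i : ι) : Fin (N + 1) :=
  ⟨⌊N * μ.1.real (p ⁻¹' {i})⌋₊, Nat.lt_succ_of_le (Nat.floor_le_of_le
    (mul_le_of_le_one_right N.cast_nonneg
      ((measureReal_mono (subset_univ _)).trans μ.real_univ_le_one)))⟩

theorem measurableSet_preimage_roundedMasses [OpensMeasurableSpace X] {ι : Type*} [Countable ι]
    {p : X → ι} (hp : ∀ i, MeasurableSet[baire X] (p ⁻¹' {i})) (N : ℕ) (k : ι → Fin (N + 1)) :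
    MeasurableSet[@baire (SubProb X) (subProbWeakTop X)] (roundedMasses p N ⁻¹' {k}) := by
  let _ : TopologicalSpace (SubProb X) := subProbWeakTop X
  let _ : MeasurableSpace (SubProb X) := baire (SubProb X)
  have preimage_eq : roundedMasses p N ⁻¹' {k} =
      ⋂ i, (fun μ : SubProb X => ⌊N * μ.1.real (p ⁻¹' {i})⌋₊) ⁻¹' {(k i : ℕ)} := by
    ext μ
    simp [roundedMasses, funext_iff, Fin.ext_iff]
  rw [preimage_eq]
  refine .iInter fun i => (Nat.measurable_floor.comp ?_) (measurableSet_singleton _)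
  exact (measurable_apply_of_measurableSet_baire (hp i)).ennreal_toReal.const_mul (N : ℝ)

theorem FinitelyBaireApproximable.uwDist [OpensMeasurableSpace X] {d : X → X → ℝ}
    (h : FinitelyBaireApproximable d) (hd : IsUnitCost d) (hsymm : ∀ x y, d x y = d y x) :
    @FinitelyBaireApproximable (SubProb X) (subProbWeakTop X) fun μ ν => uwDist d μ.1 ν.1 := by
  intro ε hε
  obtain ⟨ι, _, p, hp, hosc⟩ := h (ε / 2) (half_pos hε)
  let _ : MeasurableSpace ι := ⊤
  have measurable_p : Measurable p := measurable_to_countable' fun i => baire_le _ (hp i)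
  obtain ⟨N, hN⟩ := exists_nat_gt (6 * Nat.card ι / ε)
  have hN₀ : 0 < N := Nat.cast_pos.1 (bot_le.trans_lt hN)
  refine ⟨ι → Fin (N + 1), inferInstance, roundedMasses p N,
    measurableSet_preimage_roundedMasses hp N, fun μ μ' ν ν' hμ hν => ?_⟩
  have masses_close {μ ν : SubProb X} (h : roundedMasses p N μ = roundedMasses p N ν) (i : ι) :
      |μ.1.real (p ⁻¹' {i}) - ν.1.real (p ⁻¹' {i})| ≤ ((N : NNReal)⁻¹ : NNReal) :=
    abs_sub_le_inv_of_floor_mul_eq hN₀ measureReal_nonneg measureReal_nonneg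
      (congrArg Fin.val (congrFun h i))
  refine (abs_uwDist_sub_le_of_partition hd hsymm measurable_p hosc (masses_close hμ)
    (masses_close hν)).trans ?_
  have error_le : ε / 2 + 3 * Nat.card ι * (N : NNReal)⁻¹ ≤ ε := by
    have halves : 3 * (Nat.card ι : NNReal) / N ≤ ε / 2 := by
      rw [div_lt_iff₀ hε] at hN
      rw [div_le_div_iff₀ (by positivity) two_pos]
      linarith
    calc _ ≤ ε / 2 + ε / 2 := by rw [← div_eq_mul_inv]; gcongr
      _ = ε := add_halves ε
  exact_mod_cast error_le

end BairePartitions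

section IteratedDegreeMeasures

instance (h : ℕ) : Nonempty (M h) :=
  match h with
  | 0 => ⟨()⟩
  | _ + 1 => ⟨ofSub ⟨0, zero_le_one⟩⟩

theorem isUnitCost_and_comm_and_finitelyBaireApproximable_Wdist (h : ℕ) :
    IsUnitCost (Wdist h) ∧ (∀ α β, Wdist h α β = Wdist h β α) ∧
      FinitelyBaireApproximable (Wdist h) := by
  induction h with
  | zero =>
    refine ⟨⟨fun _ _ => le_rfl, fun _ _ => zero_le_one, measurable_const⟩, fun _ _ => rfl,
      fun ε _ => ⟨Unit, inferInstance, fun _ => (), fun _ => ?_, fun _ _ _ _ _ _ => ?_⟩⟩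
    · exact @MeasurableSet.const _ (baire (M 0)) _
    · simp [Wdist]
  | succ h ih =>
    obtain ⟨hd, hsymm, happrox⟩ := ih
    have approximable : FinitelyBaireApproximable (Wdist (h + 1)) := happrox.uwDist hd hsymm
    exact ⟨⟨fun α β => uwDist_nonneg hd hsymm (toSub α) (toSub β),
      fun α β => uwDist_le_one hd hsymm (toSub α) (toSub β), approximable.measurable⟩,
      fun α β => uwDist_comm hd hsymm (toSub α) (toSub β), approximable⟩

theorem isUnitCost_Wdist (h : ℕ) : IsUnitCost (Wdist h) :=
  (isUnitCost_and_comm_and_finitelyBaireApproximable_Wdist h).1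

theorem inv_mul_Wdist_mem_Icc (h : ℕ) (α β : M h) : (h : ℝ)⁻¹ * Wdist h α β ∈ Icc 0 1 :=
  have hd := isUnitCost_Wdist h
  ⟨mul_nonneg (by positivity) (hd.nonneg α β),
    mul_le_one₀ (Nat.cast_inv_le_one h) (hd.nonneg α β) (hd.le_one α β)⟩

theorem measurable_Minf_apply (h : ℕ) : Measurable fun α : Minf => α.1 h :=
  ((continuous_apply h).comp continuous_subtype_val).measurable

theorem isUnitCost_dWinf : IsUnitCost dWinf where
  nonneg α β := Real.iSup_nonneg fun h => (inv_mul_Wdist_mem_Icc h (α.1 h) (β.1 h)).1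
  le_one α β := ciSup_le fun h => (inv_mul_Wdist_mem_Icc h (α.1 h) (β.1 h)).2
  measurable := .iSup fun h => ((isUnitCost_Wdist h).measurable.comp
    ((measurable_Minf_apply h).prodMap (measurable_Minf_apply h))).const_mul _

theorem Wdist_le_mul_dWinf {h : ℕ} (hh : 0 < h) (α β : Minf) :
    Wdist h (α.1 h) (β.1 h) ≤ h * dWinf α β := by
  rw [← inv_mul_le_iff₀ (Nat.cast_pos.2 hh)]
  refine le_ciSup (f := fun h : ℕ => (h : ℝ)⁻¹ * Wdist h (α.1 h) (β.1 h)) ⟨1, ?_⟩ h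
  rintro _ ⟨k, rfl⟩
  exact (inv_mul_Wdist_mem_Icc k _ _).2

end IteratedDegreeMeasures

section Features

theorem continuous_integral_euclideanSpace {X : Type} [TopologicalSpace X] [MeasurableSpace X]
    [OpensMeasurableSpace X] {n : ℕ} {f : X → EuclideanSpace ℝ (Fin n)} (hf : Continuous f)
    {B : ℝ} (hB : ∀ x, ‖f x‖ ≤ B) :
    @Continuous _ _ (subProbWeakTop X) _ fun μ : SubProb X => ∫ x, f x ∂μ.1 := by
  let _ : TopologicalSpace (SubProb X) := subProbWeakTop X
  rw [← (EuclideanSpace.equiv (Fin n) ℝ).toHomeomorph.comp_continuous_iff]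
  refine continuous_pi fun i => (continuous_integral_subProbWeakTop
    ((EuclideanSpace.proj (𝕜 := ℝ) i).continuous.comp hf)
    fun x => (PiLp.norm_apply_le _ i).trans (hB x)).congr fun μ => ?_
  exact (EuclideanSpace.proj (𝕜 := ℝ) i).integral_comp_comm
    (integrable_of_norm_le_const hf.stronglyMeasurable hB μ.1)

variable {m : MPNNModel} {c : ℕ → NNReal} {B : ℕ → ℝ}

theorem continuous_idmFeat (hB : ∀ t α, ‖idmFeat m t α‖ ≤ B t) (t : ℕ) :
    Continuous (idmFeat m t) := by
  induction t with
  | zero => exact continuous_const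
  | succ t ih => exact (m.cont t).comp (continuous_integral_euclideanSpace (X := M t) ih (hB t))

theorem featureBound_nonneg (hB : ∀ t α, ‖idmFeat m t α‖ ≤ B t) (t : ℕ) : 0 ≤ B t :=
  (norm_nonneg _).trans (hB t (Classical.arbitrary (M t)))

theorem mpnnC_nonneg (hB₀ : ∀ t, 0 ≤ B t) (t : ℕ) : 0 ≤ mpnnC c B t := by
  induction t with
  | zero => exact le_rfl
  | succ t ih => exact mul_nonneg (c t).coe_nonneg (add_nonneg (hB₀ t) ih)

theorem norm_idmFeat_sub_le_mul_Wdist (hc : ∀ t, LipschitzOnWith (c t) (m.φ t) (aggSet m t))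
    (hB : ∀ t α, ‖idmFeat m t α‖ ≤ B t) (t : ℕ) (α β : M t) :
    ‖idmFeat m t α - idmFeat m t β‖ ≤ mpnnC c B t * Wdist t α β := by
  induction t with
  | zero => simp [idmFeat, mpnnC]
  | succ t ih =>
    have hB₀ := featureBound_nonneg hB
    have aggregate_le := norm_integral_sub_integral_le_mul_uwDist (isUnitCost_Wdist t)
      (continuous_idmFeat hB t).stronglyMeasurable (hB₀ t) (mpnnC_nonneg hB₀ t) (hB t) ih
      (toSub α) (toSub β)
    calc ‖idmFeat m (t + 1) α - idmFeat m (t + 1) β‖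
        ≤ c t * ‖∫ x, idmFeat m t x ∂toMeas α - ∫ x, idmFeat m t x ∂toMeas β‖ :=
          (hc t).norm_sub_le ⟨α, rfl⟩ ⟨β, rfl⟩
      _ ≤ c t * ((B t + mpnnC c B t) * Wdist (t + 1) α β) :=
          mul_le_mul_of_nonneg_left aggregate_le (c t).coe_nonneg
      _ = mpnnC c B (t + 1) * Wdist (t + 1) α β := (mul_assoc _ _ _).symm

theorem norm_idmFeat_sub_le_mul_dWinf (hc : ∀ t, LipschitzOnWith (c t) (m.φ t) (aggSet m t))
    (hB : ∀ t α, ‖idmFeat m t α‖ ≤ B t) (t : ℕ) (α β : Minf) :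
    ‖idmFeat m t (α.1 t) - idmFeat m t (β.1 t)‖ ≤ t * mpnnC c B t * dWinf α β := by
  obtain rfl | ht := t.eq_zero_or_pos
  · simp [idmFeat]
  · calc ‖idmFeat m t (α.1 t) - idmFeat m t (β.1 t)‖
        ≤ mpnnC c B t * Wdist t (α.1 t) (β.1 t) := norm_idmFeat_sub_le_mul_Wdist hc hB t _ _
      _ ≤ mpnnC c B t * (t * dWinf α β) := mul_le_mul_of_nonneg_left
          (Wdist_le_mul_dWinf ht α β) (mpnnC_nonneg (featureBound_nonneg hB) t)
      _ = t * mpnnC c B t * dWinf α β := by ring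

variable {L n : ℕ} {ψ : EuclideanSpace ℝ (Fin (m.d L)) → EuclideanSpace ℝ (Fin n)} {K : NNReal}

theorem norm_readout_sub_le_mul_wassersteinDist_Wdist
    (hc : ∀ t, LipschitzOnWith (c t) (m.φ t) (aggSet m t))
    (hB : ∀ t α, ‖idmFeat m t α‖ ≤ B t) (hψ : LipschitzOnWith K ψ (probAgg m L))
    (μ ν : ProbM (M L)) :
    ‖ψ (∫ β, idmFeat m L β ∂μ.1) - ψ (∫ β, idmFeat m L β ∂ν.1)‖ ≤
      K * (mpnnC c B L * wassersteinDist (Wdist L) μ.1 ν.1) :=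
  have := μ.2
  have := ν.2
  norm_comp_integral_sub_le_mul_wassersteinDist hψ (isUnitCost_Wdist L)
    (continuous_idmFeat hB L).stronglyMeasurable (mpnnC_nonneg (featureBound_nonneg hB) L) (hB L)
    (norm_idmFeat_sub_le_mul_Wdist hc hB L) ⟨μ, rfl⟩ ⟨ν, rfl⟩

theorem norm_readout_sub_le_mul_wassersteinDist_dWinf
    (hc : ∀ t, LipschitzOnWith (c t) (m.φ t) (aggSet m t))
    (hB : ∀ t α, ‖idmFeat m t α‖ ≤ B t) (hψ : LipschitzOnWith K ψ (probAgg m L))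
    (μ ν : ProbM Minf) :
    ‖ψ (∫ β, idmFeat m L β ∂(μ.1.map fun α => α.1 L)) -
        ψ (∫ β, idmFeat m L β ∂(ν.1.map fun α => α.1 L))‖ ≤
      K * (L * mpnnC c B L * wassersteinDist dWinf μ.1 ν.1) := by
  have measurable_apply := measurable_Minf_apply L
  have stronglyMeasurable := (continuous_idmFeat hB L).stronglyMeasurable
  have integral_map_eq (ρ : ProbM Minf) : ∫ β, idmFeat m L β ∂(ρ.1.map fun α => α.1 L) =
      ∫ α, idmFeat m L (α.1 L) ∂ρ.1 :=
    integral_map measurable_apply.aemeasurable stronglyMeasurable.aestronglyMeasurable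
  have integral_mem (ρ : ProbM Minf) : ∫ α, idmFeat m L (α.1 L) ∂ρ.1 ∈ probAgg m L :=
    have := ρ.2
    ⟨⟨ρ.1.map fun α => α.1 L, Measure.isProbabilityMeasure_map measurable_apply.aemeasurable⟩,
      (integral_map_eq ρ).symm⟩
  have := μ.2
  have := ν.2
  rw [integral_map_eq μ, integral_map_eq ν]
  exact norm_comp_integral_sub_le_mul_wassersteinDist hψ isUnitCost_dWinf
    (stronglyMeasurable.comp_measurable measurable_apply)
    (mul_nonneg L.cast_nonneg (mpnnC_nonneg (featureBound_nonneg hB) L)) (fun α => hB L _)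
    (norm_idmFeat_sub_le_mul_dWinf hc hB L) (integral_mem μ) (integral_mem ν)

end Features

/-- MPNNs are Lipschitz w.r.t. the (unbalanced) Wasserstein metrics: on `M L` and on
`P(M L)` with constants `C_φ` and `C_{(φ,ψ)}`, and on `M = M_∞` and `P(M)` with an
additional factor of `L`. Here `c t` is a Lipschitz constant of `φ t` on its set of
attainable inputs, `B t` bounds the norms of the `t`-th layer features, `cψ` is a
Lipschitz constant of `ψ` on its attainable inputs, and
`C_{(φ,ψ)} = cψ · (B L + C_φ)`. -/
theorem mpnn_lipschitz (L : ℕ) (m : MPNNModel) (c : ℕ → NNReal) (B : ℕ → ℝ)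
    (hc : ∀ t, LipschitzOnWith (c t) (m.φ t) (aggSet m t))
    (hB : ∀ t α, ‖idmFeat m t α‖ ≤ B t)
    (dout : ℕ) (ψ : EuclideanSpace ℝ (Fin (m.d L)) → EuclideanSpace ℝ (Fin dout))
    (cψ : NNReal) (hψ : LipschitzOnWith cψ ψ (probAgg m L)) :
    (∀ α β : M L,
      ‖idmFeat m L α - idmFeat m L β‖ ≤ mpnnC c B L * Wdist L α β) ∧
    (∀ μ ν : ProbM (M L),
      ‖ψ (∫ β, idmFeat m L β ∂μ.1) - ψ (∫ β, idmFeat m L β ∂ν.1)‖ ≤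
        (cψ : ℝ) * (B L + mpnnC c B L) * wassersteinDist (Wdist L) μ.1 ν.1) ∧
    (∀ α β : Minf,
      ‖idmFeat m L (α.1 L) - idmFeat m L (β.1 L)‖ ≤
        (L : ℝ) * mpnnC c B L * dWinf α β) ∧
    (∀ μ ν : ProbM Minf,
      ‖ψ (∫ β, idmFeat m L β ∂(μ.1.map fun a => a.1 L)) -
          ψ (∫ β, idmFeat m L β ∂(ν.1.map fun a => a.1 L))‖ ≤
        (L : ℝ) * ((cψ : ℝ) * (B L + mpnnC c B L)) * wassersteinDist dWinf μ.1 ν.1) := by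
  have hB₀ := featureBound_nonneg hB
  have mpnnC_le : mpnnC c B L ≤ B L + mpnnC c B L := le_add_of_nonneg_left (hB₀ L)
  refine ⟨norm_idmFeat_sub_le_mul_Wdist hc hB L, fun μ ν => ?_,
    norm_idmFeat_sub_le_mul_dWinf hc hB L, fun μ ν => ?_⟩
  · have := wassersteinDist_nonneg (isUnitCost_Wdist L) μ.1 ν.1
    calc _ ≤ cψ * (mpnnC c B L * wassersteinDist (Wdist L) μ.1 ν.1) :=
          norm_readout_sub_le_mul_wassersteinDist_Wdist hc hB hψ μ ν
      _ ≤ cψ * ((B L + mpnnC c B L) * wassersteinDist (Wdist L) μ.1 ν.1) := by gcongr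
      _ = _ := by ring
  · have := wassersteinDist_nonneg isUnitCost_dWinf μ.1 ν.1
    calc _ ≤ cψ * (L * mpnnC c B L * wassersteinDist dWinf μ.1 ν.1) :=
          norm_readout_sub_le_mul_wassersteinDist_dWinf hc hB hψ μ ν
      _ ≤ cψ * (L * (B L + mpnnC c B L) * wassersteinDist dWinf μ.1 ν.1) := by gcongr
      _ = _ := by ring

end
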